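/- Let p be a nonzero multiaffine real stable polynomial in ℝ[z_1,…,z_{2n}] with a ∈ ℝ^{2n} above the roots of p, normalized so that p(a) > 0. Let δ_1,…,δ_{2n} ≥ 0 satisfy, for each i ∈ [n]: (∂_i p + ∂_{n+i} p)(a) > 0 and δ_i + δ_{n+i} ≤ p(a)/((∂_i p + ∂_{n+i} p)(a)). Let q = [∏_{i=1}^{n} (∂_i + ∂_{n+i})] p and assume q is not identically zero. Then the point a − Σ_{i=1}^{2n} δ_i e_i is above the roots of q, and for every k ∈ [2n], (∂_k q/q)(a − Σ_{i=1}^{2n} δ_i e_i) ≤ (∂_k p/p)(a). -/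

import Mathlib

/-- A multivariate real polynomial is real stable if it does not vanish when all
variables take values in the open upper half plane. -/
def RealStable {σ : Type*} (p : MvPolynomial σ ℝ) : Prop :=
  ∀ z : σ → ℂ, (∀ i, 0 < (z i).im) → (MvPolynomial.aeval z) p ≠ 0

/-- degree at most 1 in each variable -/
def MultiAffine {σ : Type*} (p : MvPolynomial σ ℝ) : Prop :=
  ∀ m ∈ p.support, ∀ i, m i ≤ 1

/-- `a` is above the roots of `p` if `p` does not vanish on `a + ℝ₊ⁿ`. -/
def AboveRoots {σ : Type*} (p : MvPolynomial σ ℝ) (a : σ → ℝ) : Prop :=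
  ∀ t : σ → ℝ, (∀ i, 0 ≤ t i) → MvPolynomial.eval (a + t) p ≠ 0

open MvPolynomial

section MultiAffinePolynomials

variable {σ : Type*}

protected theorem MultiAffine.pderiv {p : MvPolynomial σ ℝ} (hp : MultiAffine p) (i : σ) :
    MultiAffine (pderiv i p) := by
  intro m hm k
  rw [mem_support_iff, coeff_pderiv] at hm
  have h := hp (m + Finsupp.single i 1) (mem_support_iff.2 (left_ne_zero_of_mul hm)) k
  rw [Finsupp.add_apply] at h
  omega

protected theorem MultiAffine.add {p q : MvPolynomial σ ℝ}
    (hp : MultiAffine p) (hq : MultiAffine q) :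
    MultiAffine (p + q) := by
  classical
  intro m hm k
  rcases Finset.mem_union.1 (support_add hm) with h | h
  · exact hp m h k
  · exact hq m h k

theorem MultiAffine.pderiv_pderiv_self {p : MvPolynomial σ ℝ} (hp : MultiAffine p) (i : σ) :
    pderiv i (pderiv i p) = 0 := by
  ext m
  rw [coeff_pderiv, coeff_pderiv, coeff_zero]
  by_contra h
  have h1 := hp _ (mem_support_iff.2 (left_ne_zero_of_mul (left_ne_zero_of_mul h))) i
  simp at h1

theorem MvPolynomial.pderiv_pderiv_comm (i j : σ) (p : MvPolynomial σ ℝ) :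
    pderiv i (pderiv j p) = pderiv j (pderiv i p) := by
  classical
  rcases eq_or_ne i j with rfl | h
  · rfl
  · ext m
    simp only [coeff_pderiv, Finsupp.add_apply, Finsupp.single_eq_of_ne h,
      Finsupp.single_eq_of_ne h.symm, add_zero]
    rw [add_right_comm]
    ring

/-- A multiaffine polynomial is affine along each coordinate direction. -/
theorem MultiAffine.aeval_add_single [DecidableEq σ] {A : Type*} [CommRing A] [Algebra ℝ A]
    {p : MvPolynomial σ ℝ} (hp : MultiAffine p) (z : σ → A) (i : σ) (s : A) :
    aeval (z + Pi.single i s) p = aeval z p + s * aeval z (pderiv i p) := by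
  rw [p.as_sum]
  simp only [map_sum, Finset.mul_sum, ← Finset.sum_add_distrib]
  refine Finset.sum_congr rfl fun m hm => ?_
  rw [pderiv_monomial, aeval_monomial, aeval_monomial, aeval_monomial]
  have hm1 := hp m hm i
  have hne : ∀ r : σ →₀ ℕ, r i = 0 →
      (r.prod fun k e => (z + Pi.single i s : σ → A) k ^ e) = r.prod fun k e => z k ^ e := by
    intro r hr
    refine Finset.prod_congr rfl fun k hk => ?_
    have hki : k ≠ i := by
      rintro rfl
      exact (Finsupp.mem_support_iff.1 hk) hr
    simp [hki]
  rcases Nat.le_one_iff_eq_zero_or_eq_one.1 hm1 with h0 | h1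
  · rw [hne m h0, h0]
    simp
  · obtain ⟨r, rfl⟩ : ∃ r, m = Finsupp.single i 1 + r :=
      ⟨m - Finsupp.single i 1, by
        rw [add_tsub_cancel_of_le]
        rw [Finsupp.single_le_iff, h1]⟩
    have hr : r i = 0 := by
      rw [Finsupp.add_apply, Finsupp.single_eq_same] at h1
      omega
    rw [add_tsub_cancel_left, Finsupp.prod_add_index' (by simp) (by intros; rw [pow_add]),
      Finsupp.prod_add_index' (by simp) (by intros; rw [pow_add]), hne r hr, h1]
    simp only [Finsupp.prod_single_index, pow_zero, pow_one, Pi.add_apply, Pi.single_eq_same,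
      Nat.cast_one, mul_one]
    ring

theorem MultiAffine.eval_add_single [DecidableEq σ]
    {p : MvPolynomial σ ℝ} (hp : MultiAffine p) (x : σ → ℝ) (i : σ) (s : ℝ) :
    eval (x + Pi.single i s) p = eval x p + s * eval x (pderiv i p) :=
  hp.aeval_add_single x i s

end MultiAffinePolynomials

section Stability

variable {σ : Type*}

theorem MvPolynomial.aeval_ofReal (p : MvPolynomial σ ℝ) (x : σ → ℝ) :
    aeval (fun l => (x l : ℂ)) p = ((eval x p : ℝ) : ℂ) :=
  aeval_algebraMap_apply ℂ x p

/-- The logarithmic derivatives of a multiaffine real stable polynomial map the open upper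
half planes to the closed lower half plane. -/
theorem RealStable.im_pderiv_div_nonpos {p : MvPolynomial σ ℝ} (hps : RealStable p)
    (hpm : MultiAffine p) (i : σ) {z : σ → ℂ} (hz : ∀ l, 0 < (z l).im) :
    (aeval z (pderiv i p) / aeval z p).im ≤ 0 := by
  classical
  by_contra! h
  set w := aeval z (pderiv i p) / aeval z p with hw
  have hw0 : w ≠ 0 := by
    rintro h0
    rw [h0] at h
    simp at h
  have hp0 := hps z hz
  have hs : 0 < (-w⁻¹).im := by
    rw [Complex.neg_im, Complex.inv_im, neg_div, neg_neg]
    exact div_pos h (Complex.normSq_pos.2 hw0)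
  refine hps (z + Pi.single i (-w⁻¹)) (fun l => ?_) ?_
  · rcases eq_or_ne l i with rfl | hl
    · simpa using add_pos (hz l) hs
    · simpa [hl] using hz l
  · rw [hpm.aeval_add_single]
    have : aeval z (pderiv i p) = w * aeval z p := by
      rw [hw, div_mul_cancel₀ _ hp0]
    rw [this]
    field_simp
    ring

/-- The Rayleigh inequality for multiaffine real stable polynomials. -/
theorem RealStable.rayleigh {p : MvPolynomial σ ℝ} (hps : RealStable p)
    (hpm : MultiAffine p) (i j : σ) (x : σ → ℝ) :
    eval x p * eval x (pderiv j (pderiv i p)) ≤ eval x (pderiv i p) * eval x (pderiv j p) := by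
  classical
  let Z : ℝ → σ → ℂ := fun η l => ((x l : ℂ) + (Pi.single j Complex.I : σ → ℂ) l) + η * Complex.I
  let F : ℝ → ℝ := fun η => (aeval (Z η) (pderiv i p) * starRingEnd ℂ (aeval (Z η) p)).im
  have hZ : Continuous Z := by
    refine continuous_pi fun l => ?_
    fun_prop
  have hcont : ∀ g : MvPolynomial σ ℝ, Continuous fun η => aeval (Z η) g := by
    intro g
    induction g using MvPolynomial.induction_on with
    | C a => simp only [aeval_C]; fun_prop
    | add f g hf hg => simp only [map_add]; exact hf.add hg
    | mul_X f k hf =>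
      simp only [map_mul, aeval_X]
      exact hf.mul ((continuous_apply k).comp hZ)
  have hF : Continuous F :=
    Complex.continuous_im.comp ((hcont _).mul (Complex.continuous_conj.comp (hcont _)))
  have hneg : ∀ η ∈ Set.Ioi (0 : ℝ), F η ≤ 0 := by
    intro η hη
    have hz : ∀ l, 0 < (Z η l).im := by
      intro l
      rcases eq_or_ne l j with rfl | hl
      · simp only [Z, Pi.single_eq_same]
        simp
        linarith [Set.mem_Ioi.1 hη]
      · simpa [Z, hl] using hη
    have h := hps.im_pderiv_div_nonpos hpm i hz
    have hp0 := hps _ hz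
    have hn := Complex.normSq_pos.2 hp0
    have hEq : aeval (Z η) (pderiv i p) * starRingEnd ℂ (aeval (Z η) p)
        = (aeval (Z η) (pderiv i p) / aeval (Z η) p) * (Complex.normSq (aeval (Z η) p) : ℝ) := by
      rw [← Complex.mul_conj]
      field_simp
    change (_ * _ : ℂ).im ≤ 0
    rw [hEq, Complex.im_mul_ofReal]
    exact mul_nonpos_of_nonpos_of_nonneg h hn.le
  have h0 : F 0 ≤ 0 := by
    have : (0 : ℝ) ∈ closure (Set.Ioi (0 : ℝ)) := by
      rw [closure_Ioi]
      exact Set.self_mem_Ici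
    exact closure_minimal hneg (isClosed_le hF continuous_const) this
  have hZ0 : Z 0 = (fun l => (x l : ℂ)) + Pi.single j Complex.I := by
    ext l
    simp [Z]
  simp only [F, hZ0, hpm.aeval_add_single, (hpm.pderiv i).aeval_add_single, aeval_ofReal] at h0
  simp at h0
  linarith

theorem RealStable.eval_mul_directional_le {p : MvPolynomial σ ℝ} (hps : RealStable p)
    (hpm : MultiAffine p) (i j k : σ) (x : σ → ℝ) :
    eval x p * eval x (pderiv k (pderiv i p + pderiv j p)) ≤
      eval x (pderiv i p + pderiv j p) * eval x (pderiv k p) := by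
  have h1 := hps.rayleigh hpm i k x
  have h2 := hps.rayleigh hpm j k x
  simp only [map_add]
  linarith

/-- A nonzero sum of two partial derivatives of a multiaffine real stable polynomial is real
stable. -/
theorem RealStable.pderiv_add_pderiv {p : MvPolynomial σ ℝ} [Fintype σ] (hps : RealStable p)
    (hpm : MultiAffine p) (i j : σ) (hq : pderiv i p + pderiv j p ≠ 0) :
    RealStable (pderiv i p + pderiv j p) := by
  intro z hz hzero
  set q := pderiv i p + pderiv j p with hqdef
  apply hq
  suffices h : ∀ h : σ → ℂ, aeval (z + h) q = 0 by
    refine MvPolynomial.funext fun x => ?_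
    have := h ((fun l => (x l : ℂ)) - z)
    rw [add_sub_cancel, aeval_ofReal] at this
    simpa using this
  intro h
  let L : ℂ → σ → ℂ := fun u l => z l + u * h l
  have hL : ∀ (g : MvPolynomial σ ℝ) (u : ℂ), AnalyticAt ℂ (fun u => aeval (L u) g) u := by
    intro g u
    have := AnalyticAt.aeval_mvPolynomial (𝕜 := ℂ) (z := u) (f := L)
      (fun l => by simp only [L]; fun_prop) (MvPolynomial.map (algebraMap ℝ ℂ) g)
    simpa [aeval_map_algebraMap] using this
  have hL0 : L 0 = z := by
    ext l
    simp [L]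
  have hLim : ∀ᶠ u in nhds (0 : ℂ), ∀ l, 0 < (L u l).im := by
    refine Filter.eventually_all.2 fun l => ?_
    have hc : Continuous fun u => (L u l).im := by
      simp only [L]
      fun_prop
    refine hc.continuousAt.eventually (lt_mem_nhds ?_)
    simpa [L] using hz l
  have hnum := hL q
  have hden := hL p
  have hp0 : aeval (L 0) p ≠ 0 := by
    rw [hL0]
    exact hps z hz
  have hquot : AnalyticAt ℂ (fun u => aeval (L u) q / aeval (L u) p) 0 :=
    (hnum 0).div (hden 0) hp0
  have hval : aeval (L 0) q / aeval (L 0) p = 0 := by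
    rw [hL0, hzero, zero_div]
  have hev : ∀ᶠ u in nhds (0 : ℂ), aeval (L u) q = 0 := by
    rcases hquot.eventually_constant_or_nhds_le_map_nhds with hc | hopen
    · filter_upwards [hc, hLim] with u hu hpos
      rw [hval] at hu
      exact (div_eq_zero_iff.1 hu).resolve_right (hps _ hpos)
    · exfalso
      rw [hval] at hopen
      have hle : ∀ᶠ w in nhds (0 : ℂ), w.im ≤ 0 := by
        refine hopen ?_
        rw [Filter.mem_map]
        filter_upwards [hLim] with u hu
        have h1 := hps.im_pderiv_div_nonpos hpm i hu
        have h2 := hps.im_pderiv_div_nonpos hpm j hu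
        simp only [Set.mem_preimage, Set.mem_ofPred_eq, hqdef, map_add, add_div, Complex.add_im]
        linarith
      have hc : Filter.Tendsto (fun t : ℝ => (t : ℂ) * Complex.I) (nhdsWithin 0 (Set.Ioi 0))
          (nhds 0) := by
        have : Continuous fun t : ℝ => (t : ℂ) * Complex.I := by fun_prop
        simpa using (this.tendsto 0).mono_left nhdsWithin_le_nhds
      obtain ⟨t, ht, htpos⟩ := ((hc.eventually hle).and self_mem_nhdsWithin).exists
      simp at ht
      exact absurd htpos (not_lt.2 ht)
  have hall : (fun u => aeval (L u) q) = fun _ => 0 :=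
    AnalyticOnNhd.eq_of_eventuallyEq (z₀ := 0) (fun u _ => hnum u) (fun _ _ => analyticAt_const) hev
  have := congrFun hall 1
  have hL1 : L 1 = z + h := by
    ext l
    simp [L]
  simpa [hL1] using this

end Stability

section AboveTheRoots

variable {σ : Type*}

protected theorem AboveRoots.add {p : MvPolynomial σ ℝ} {x : σ → ℝ} (hx : AboveRoots p x)
    {t : σ → ℝ}
    (ht : ∀ l, 0 ≤ t l) : AboveRoots p (x + t) := by
  intro s hs
  rw [add_assoc]
  exact hx _ fun l => add_nonneg (ht l) (hs l)

/-- A predicate preserved by nonnegative coordinate shifts is preserved by all nonnegative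
shifts. -/
theorem forall_add_of_forall_add_single [Fintype σ] [DecidableEq σ] {P : (σ → ℝ) → Prop}
    (hP : ∀ x k s, 0 ≤ s → P x → P (x + Pi.single k s)) {a : σ → ℝ} (ha : P a) {t : σ → ℝ}
    (ht : ∀ l, 0 ≤ t l) : P (a + t) := by
  have h : ∀ S : Finset σ, P (a + ∑ l ∈ S, Pi.single l (t l)) := by
    intro S
    induction S using Finset.induction_on with
    | empty => simpa using ha
    | insert k S hk ih =>
      rw [Finset.sum_insert hk, add_comm (Pi.single (M := fun _ => ℝ) k (t k)), ← add_assoc]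
      exact hP _ _ _ (ht k) ih
  simpa only [Finset.univ_sum_single] using h Finset.univ

/-- The point `x` is above the roots of `p`, and `p` is positive there. -/
def PosAboveRoots (p : MvPolynomial σ ℝ) (x : σ → ℝ) : Prop :=
  AboveRoots p x ∧ 0 < eval x p

theorem nonneg_of_forall_add_mul_nonneg {c d : ℝ} (h : ∀ s, 0 ≤ s → 0 ≤ c + s * d) : 0 ≤ d := by
  by_contra! hd
  have hc : 0 ≤ c := by simpa using h 0 le_rfl
  have h1 := h ((c + 1) / -d) (div_nonneg (by linarith) (by linarith))
  have : (c + 1) / -d * d = -(c + 1) := by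
    rw [div_mul_eq_mul_div, div_eq_iff (by linarith)]
    ring
  linarith

namespace PosAboveRoots

variable [DecidableEq σ] {p : MvPolynomial σ ℝ} {x : σ → ℝ}

theorem eval_pderiv_nonneg (hx : PosAboveRoots p x) (hpm : MultiAffine p) (k : σ) :
    0 ≤ eval x (pderiv k p) := by
  by_contra! hd
  have hs : 0 ≤ eval x p / -eval x (pderiv k p) := div_nonneg hx.2.le (by linarith)
  refine hx.1 (Pi.single k (eval x p / -eval x (pderiv k p))) (fun l => ?_) ?_
  · rcases eq_or_ne l k with rfl | hl
    · simpa using hs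
    · simp [hl]
  · rw [hpm.eval_add_single, div_neg, neg_mul, div_mul_cancel₀ _ hd.ne, add_neg_cancel]

theorem add_single (hx : PosAboveRoots p x) (hpm : MultiAffine p) (k : σ) {s : ℝ} (hs : 0 ≤ s) :
    PosAboveRoots p (x + Pi.single k s) := by
  refine ⟨hx.1.add fun l => ?_, ?_⟩
  · rcases eq_or_ne l k with rfl | hl
    · simpa using hs
    · simp [hl]
  · rw [hpm.eval_add_single]
    have := mul_nonneg hs (hx.eval_pderiv_nonneg hpm k)
    linarith [hx.2]

theorem eval_pderiv_pderiv_nonneg (hx : PosAboveRoots p x) (hpm : MultiAffine p) (k i : σ) :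
    0 ≤ eval x (pderiv k (pderiv i p)) := by
  refine nonneg_of_forall_add_mul_nonneg (c := eval x (pderiv i p)) fun s hs => ?_
  rw [← (hpm.pderiv i).eval_add_single]
  exact (hx.add_single hpm k hs).eval_pderiv_nonneg hpm i

end PosAboveRoots

end AboveTheRoots

section PotentialShift

variable {σ : Type*} [DecidableEq σ]

theorem MultiAffine.eval_shift_pderiv_add_pderiv {p : MvPolynomial σ ℝ} (hpm : MultiAffine p)
    (i j : σ) (x : σ → ℝ) (d e : ℝ) :
    eval (x - (Pi.single i d + Pi.single j e)) (pderiv i p + pderiv j p) =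
      eval x (pderiv i p) + eval x (pderiv j p) -
        (d + e) * eval x (pderiv j (pderiv i p)) := by
  have hb : x - (Pi.single i d + Pi.single j e) = x + Pi.single i (-d) + Pi.single j (-e) := by
    rw [Pi.single_neg, Pi.single_neg]
    abel
  have hi := hpm.pderiv i
  have hj := hpm.pderiv j
  rw [hb, map_add, hi.eval_add_single, hi.eval_add_single, (hi.pderiv j).eval_add_single,
    hj.eval_add_single, hj.eval_add_single, (hj.pderiv j).eval_add_single,
    pderiv_pderiv_comm i j p, pderiv_pderiv_comm i j (pderiv i p),
    hpm.pderiv_pderiv_self i, hpm.pderiv_pderiv_self j]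
  simp only [map_zero]
  ring

/-- The inequality between the coefficients of a trivariate multiaffine polynomial behind the
potential shift. The quadratic form `hs` is a Rayleigh difference along the second variable. -/
theorem potential_coeff_le {p x y z p12 p13 p23 p123 d : ℝ} (hp : 0 < p) (hx : 0 ≤ x)
    (hy : 0 ≤ y) (h12 : 0 ≤ p12)
    (hs : ∀ s, (p + s * y) * (p13 + s * p123) ≤ (z + s * p23) * (x + s * p12))
    (h23 : p * p23 ≤ z * y) (hd : 0 ≤ d) (hdp : d * (x + y) ≤ p) :
    p * (p13 + p23 - d * p123) ≤ z * (x + y - d * p12) := by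
  obtain ⟨u, hu⟩ : ∃ u, u = z * x - p * p13 := ⟨_, rfl⟩
  obtain ⟨v, hv⟩ : ∃ v, v = z * y - p * p23 := ⟨_, rfl⟩
  obtain ⟨K, hK⟩ : ∃ K, K = p ^ 2 * p123 - p * (x * p23 + y * p13 + z * p12) + 2 * x * y * z :=
    ⟨_, rfl⟩
  have hu0 : 0 ≤ u := by
    have := hs 0
    simp only [zero_mul, add_zero] at this
    linarith
  have hv0 : 0 ≤ v := by linarith
  have hdisc := discrim_le_zero (a := p23 * p12 - y * p123)
    (b := z * p12 + p23 * x - p * p123 - y * p13) (c := u)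
    (fun s => by have := hs s; rw [hu]; nlinarith)
  have hKsq : K ^ 2 ≤ 4 * (x * y) * u * v := by
    have h1 : K ^ 2 - 4 * (x * y - p * p12) * u * v =
        p ^ 2 * discrim (p23 * p12 - y * p123) (z * p12 + p23 * x - p * p123 - y * p13) u := by
      rw [hK, hu, hv, discrim]
      ring
    have h2 := mul_nonpos_of_nonneg_of_nonpos (sq_nonneg p) hdisc
    have h3 : 0 ≤ p * p12 * (u * v) := by positivity
    nlinarith
  have hsum : 0 ≤ x * u + y * v + K := by
    have h1 : 0 ≤ x * u + y * v := by positivity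
    have h2 : K ^ 2 ≤ (x * u + y * v) ^ 2 := by nlinarith [sq_nonneg (x * u - y * v)]
    linarith [(abs_le_of_sq_le_sq' h2 h1).1]
  have hE : p * (z * p12 - p * p123) = x * v + y * u - K := by
    rw [hK, hu, hv]
    ring
  have hfin : p * (d * (z * p12 - p * p123)) ≤ p * (u + v) := by
    calc p * (d * (z * p12 - p * p123)) = d * (x * v + y * u - K) := by rw [← hE]; ring
      _ ≤ d * ((x + y) * (u + v)) := by gcongr; linarith
      _ = d * (x + y) * (u + v) := by ring
      _ ≤ p * (u + v) := by gcongr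
  have := le_of_mul_le_mul_left hfin hp
  linarith

variable {p : MvPolynomial σ ℝ}

/-- If the directional derivative vanishes at one point above the roots, it vanishes
identically. -/
theorem RealStable.pderiv_add_pderiv_eq_zero [Fintype σ] (hps : RealStable p)
    (hpm : MultiAffine p) (i j : σ) {a : σ → ℝ} (ha : PosAboveRoots p a)
    (h0 : eval a (pderiv i p + pderiv j p) = 0) : pderiv i p + pderiv j p = 0 := by
  have hq : MultiAffine (pderiv i p + pderiv j p) := (hpm.pderiv i).add (hpm.pderiv j)
  refine funext_set (fun l => Set.Ici (a l)) (fun l => Set.Ici_infinite _) fun x hx => ?_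
  have hmain := forall_add_of_forall_add_single
    (P := fun x => PosAboveRoots p x ∧ eval x (pderiv i p + pderiv j p) = 0)
    (fun x k s hs ⟨hx, hx0⟩ => ⟨hx.add_single hpm k hs, by
      have h1 := hps.eval_mul_directional_le hpm i j k x
      have h2 := hx.eval_pderiv_pderiv_nonneg hpm k i
      have h3 := hx.eval_pderiv_pderiv_nonneg hpm k j
      have h4 : eval x (pderiv k (pderiv i p + pderiv j p)) = 0 := by
        apply le_antisymm
        · rw [hx0, zero_mul] at h1
          exact nonpos_of_mul_nonpos_right h1 hx.2
        · rw [map_add, map_add]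
          linarith
      rw [hq.eval_add_single, hx0, h4]
      simp⟩) ⟨ha, h0⟩ (t := x - a) (fun l => sub_nonneg.2 (hx l (Set.mem_univ l)))
  rw [add_sub_cancel] at hmain
  rw [hmain.2, map_zero]

theorem RealStable.eval_shift_pos (hps : RealStable p) (hpm : MultiAffine p) (i j : σ)
    {x : σ → ℝ} (hx : PosAboveRoots p x) (hpos : 0 < eval x (pderiv i p + pderiv j p)) {d e : ℝ}
    (hde : (d + e) * eval x (pderiv i p + pderiv j p) ≤ eval x p) :
    0 < eval (x - (Pi.single i d + Pi.single j e)) (pderiv i p + pderiv j p) := by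
  rw [hpm.eval_shift_pderiv_add_pderiv]
  rw [map_add] at hpos hde
  have h1 := hps.rayleigh hpm i j x
  have hi := hx.eval_pderiv_nonneg hpm i
  have hj := hx.eval_pderiv_nonneg hpm j
  have hij := hx.eval_pderiv_pderiv_nonneg hpm j i
  refine (mul_pos_iff_of_pos_right hpos).1 ?_
  have h2 := mul_le_mul_of_nonneg_right hde hij
  nlinarith [mul_nonneg hi hj, mul_pos hpos hpos]

theorem RealStable.posAboveRoots_shift [Fintype σ] (hps : RealStable p) (hpm : MultiAffine p)
    (i j : σ) {a : σ → ℝ} (ha : PosAboveRoots p a)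
    (hpos : 0 < eval a (pderiv i p + pderiv j p)) {d e : ℝ}
    (hde : (d + e) * eval a (pderiv i p + pderiv j p) ≤ eval a p) :
    PosAboveRoots (pderiv i p + pderiv j p) (a - (Pi.single i d + Pi.single j e)) := by
  have hq : MultiAffine (pderiv i p + pderiv j p) := (hpm.pderiv i).add (hpm.pderiv j)
  refine ⟨fun t ht => ?_, hps.eval_shift_pos hpm i j ha hpos hde⟩
  have hmain := forall_add_of_forall_add_single
    (P := fun x => PosAboveRoots p x ∧ 0 < eval x (pderiv i p + pderiv j p) ∧
      (d + e) * eval x (pderiv i p + pderiv j p) ≤ eval x p)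
    (fun x k s hs ⟨hx, hxpos, hxde⟩ => by
      have h1 := hps.eval_mul_directional_le hpm i j k x
      have h2 : 0 ≤ eval x (pderiv k (pderiv i p + pderiv j p)) := by
        rw [map_add, map_add]
        exact add_nonneg (hx.eval_pderiv_pderiv_nonneg hpm k i)
          (hx.eval_pderiv_pderiv_nonneg hpm k j)
      have h3 : (d + e) * eval x (pderiv k (pderiv i p + pderiv j p)) ≤ eval x (pderiv k p) := by
        refine le_of_mul_le_mul_left (le_trans ?_ h1) hxpos
        have := mul_le_mul_of_nonneg_right hxde h2
        linarith
      refine ⟨hx.add_single hpm k hs, ?_, ?_⟩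
      · rw [hq.eval_add_single]
        have := mul_nonneg hs h2
        linarith
      · rw [hq.eval_add_single, hpm.eval_add_single]
        have := mul_le_mul_of_nonneg_left h3 hs
        linarith) ⟨ha, hpos, hde⟩ ht
  have := hps.eval_shift_pos hpm i j hmain.1 hmain.2.1 hmain.2.2
  rw [sub_add_eq_add_sub]
  exact this.ne'

/-- A single potential shift. -/
theorem RealStable.potential_shift (hps : RealStable p) (hpm : MultiAffine p)
    (i j : σ) {a : σ → ℝ} (ha : PosAboveRoots p a)
    (hpos : 0 < eval a (pderiv i p + pderiv j p)) {d e : ℝ} (hd : 0 ≤ d) (he : 0 ≤ e)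
    (hde : (d + e) * eval a (pderiv i p + pderiv j p) ≤ eval a p) (k : σ) :
    eval (a - (Pi.single i d + Pi.single j e)) (pderiv k (pderiv i p + pderiv j p)) /
        eval (a - (Pi.single i d + Pi.single j e)) (pderiv i p + pderiv j p) ≤
      eval a (pderiv k p) / eval a p := by
  rw [div_le_div_iff₀ (hps.eval_shift_pos hpm i j ha hpos hde) ha.2,
    map_add (pderiv k), pderiv_pderiv_comm k i, pderiv_pderiv_comm k j,
    (hpm.pderiv k).eval_shift_pderiv_add_pderiv, hpm.eval_shift_pderiv_add_pderiv, mul_comm]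
  rw [map_add] at hde
  refine potential_coeff_le ha.2 (ha.eval_pderiv_nonneg hpm i) (ha.eval_pderiv_nonneg hpm j)
    (ha.eval_pderiv_pderiv_nonneg hpm j i) (fun s => ?_) (hps.rayleigh hpm k j a)
    (add_nonneg hd he) hde
  have := hps.rayleigh hpm k i (a + Pi.single j s)
  rwa [hpm.eval_add_single, (hpm.pderiv k).eval_add_single, (hpm.pderiv i).eval_add_single,
    ((hpm.pderiv k).pderiv i).eval_add_single] at this

/-- Successive potential shifts along a list of pairs of variables. -/
theorem RealStable.potential_shift_foldr [Fintype σ] {ι : Type*} (f g : ι → σ)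
    (hps : RealStable p) (hpm : MultiAffine p) {a : σ → ℝ} (ha : PosAboveRoots p a)
    (δ : σ → ℝ) (hδ0 : ∀ l, 0 ≤ δ l)
    (hδ : ∀ i, (δ (f i) + δ (g i)) * eval a (pderiv (f i) p + pderiv (g i) p) ≤ eval a p)
    (L : List ι) (hq0 : L.foldr (fun i q => pderiv (f i) q + pderiv (g i) q) p ≠ 0) :
    let q := L.foldr (fun i q => pderiv (f i) q + pderiv (g i) q) p
    let b := a - (L.map fun i => Pi.single (f i) (δ (f i)) + Pi.single (g i) (δ (g i))).sum
    RealStable q ∧ MultiAffine q ∧ PosAboveRoots q b ∧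
      ∀ k, eval b (pderiv k q) / eval b q ≤ eval a (pderiv k p) / eval a p := by
  induction L with
  | nil => simpa using ⟨hps, hpm, ha⟩
  | cons i L ih =>
    simp only [List.foldr_cons, List.map_cons, List.sum_cons] at hq0 ⊢
    set r := L.foldr (fun i q => pderiv (f i) q + pderiv (g i) q) p
    have hr0 : r ≠ 0 := by
      intro h
      simp [h] at hq0
    obtain ⟨hrs, hrm, hrb, hrk⟩ := ih hr0
    set b := a - (L.map fun i => Pi.single (f i) (δ (f i)) + Pi.single (g i) (δ (g i))).sum
    have hb : a - (Pi.single (f i) (δ (f i)) + Pi.single (g i) (δ (g i)) +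
        (L.map fun i => Pi.single (f i) (δ (f i)) + Pi.single (g i) (δ (g i))).sum) =
        b - (Pi.single (f i) (δ (f i)) + Pi.single (g i) (δ (g i))) := by
      rw [sub_sub, add_comm]
    rw [hb]
    have hpos : 0 < eval b (pderiv (f i) r + pderiv (g i) r) := by
      refine lt_of_le_of_ne ?_ fun h =>
        hq0 (hrs.pderiv_add_pderiv_eq_zero hrm (f i) (g i) hrb h.symm)
      rw [map_add]
      exact add_nonneg (hrb.eval_pderiv_nonneg hrm _) (hrb.eval_pderiv_nonneg hrm _)
    have hde : (δ (f i) + δ (g i)) * eval b (pderiv (f i) r + pderiv (g i) r) ≤ eval b r := by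
      have h1 := add_le_add (hrk (f i)) (hrk (g i))
      rw [← add_div, ← add_div, ← map_add, ← map_add] at h1
      have h2 := hδ i
      rw [← div_le_one ha.2, mul_div_assoc] at h2
      rw [← div_le_one hrb.2, mul_div_assoc]
      exact (mul_le_mul_of_nonneg_left h1 (add_nonneg (hδ0 _) (hδ0 _))).trans h2
    exact ⟨hrs.pderiv_add_pderiv hrm _ _ hq0, (hrm.pderiv _).add (hrm.pderiv _),
      hrs.posAboveRoots_shift hrm _ _ hrb hpos hde,
      fun k => (hrs.potential_shift hrm _ _ hrb hpos (hδ0 _) (hδ0 _) hde k).trans (hrk k)⟩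

end PotentialShift

/-- Iterated potential shift: for `p` multiaffine real stable in `2n` variables
(indexed by `Fin n ⊕ Fin n`, where `Sum.inl i` plays the role of `zᵢ` and `Sum.inr i`
that of `z_{n+i}`), applying `q = ∏ᵢ (∂ᵢ + ∂_{n+i})` and shifting by admissible `δ`'s
does not increase any potential `Φᵏ`. -/
theorem potential_shift_iterated {n : ℕ} (p : MvPolynomial (Fin n ⊕ Fin n) ℝ)
    (hp0 : p ≠ 0) (hps : RealStable p) (hpm : MultiAffine p)
    (a : Fin n ⊕ Fin n → ℝ) (ha : AboveRoots p a) (hpa : 0 < MvPolynomial.eval a p)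
    (δ : Fin n ⊕ Fin n → ℝ) (hδ0 : ∀ l, 0 ≤ δ l)
    (hpos : ∀ i : Fin n, 0 < MvPolynomial.eval a
      (MvPolynomial.pderiv (Sum.inl i) p + MvPolynomial.pderiv (Sum.inr i) p))
    (hδ : ∀ i : Fin n, δ (Sum.inl i) + δ (Sum.inr i) ≤
      MvPolynomial.eval a p / MvPolynomial.eval a
        (MvPolynomial.pderiv (Sum.inl i) p + MvPolynomial.pderiv (Sum.inr i) p))
    (q : MvPolynomial (Fin n ⊕ Fin n) ℝ)
    (hq : q = (List.finRange n).foldr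
      (fun i g => MvPolynomial.pderiv (Sum.inl i) g + MvPolynomial.pderiv (Sum.inr i) g) p)
    (hq0 : q ≠ 0) :
    AboveRoots q (a - δ) ∧
      ∀ k : Fin n ⊕ Fin n,
        MvPolynomial.eval (a - δ) (MvPolynomial.pderiv k q) /
            MvPolynomial.eval (a - δ) q ≤
          MvPolynomial.eval a (MvPolynomial.pderiv k p) / MvPolynomial.eval a p := by
  have hsum : ((List.finRange n).map fun i : Fin n =>
      (Pi.single (Sum.inl i) (δ (Sum.inl i)) + Pi.single (Sum.inr i) (δ (Sum.inr i)) :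
        Fin n ⊕ Fin n → ℝ)).sum = δ := by
    conv_rhs => rw [← Finset.univ_sum_single δ, Fintype.sum_sum_type, ← Finset.sum_add_distrib,
      ← List.sum_ofFn, List.ofFn_eq_map]
  have h := hps.potential_shift_foldr Sum.inl Sum.inr hpm ⟨ha, hpa⟩ δ hδ0
    (fun i => (le_div_iff₀ (hpos i)).1 (hδ i)) (List.finRange n) (hq ▸ hq0)
  simp only [← hq, hsum] at h
  exact ⟨h.2.2.1.1, h.2.2.2⟩
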